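/- Let A be a totally nonnegative n×n matrix that is invertible and satisfies a_{i,i+1} > 0 and a_{i+1,i} > 0 for all i = 1,…,n−1. Then A is oscillatory; in fact A^{n-1} is totally positive. -/

import Mathlib

/-- A square real matrix is totally nonnegative if all its minors are nonnegative. -/
def TotallyNonneg {n : ℕ} (A : Matrix (Fin n) (Fin n) ℝ) : Prop :=
  ∀ (k : ℕ) (r c : Fin k → Fin n), StrictMono r → StrictMono c →
    0 ≤ (A.submatrix r c).det

/-- A square real matrix is totally positive if all its minors are positive. -/
def TotallyPos {n : ℕ} (A : Matrix (Fin n) (Fin n) ℝ) : Prop :=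
  ∀ (k : ℕ) (r c : Fin k → Fin n), StrictMono r → StrictMono c →
    0 < (A.submatrix r c).det

/-!
Write `A[α|β]` for the minor of `A` with rows `α` and columns `β`. By Cauchy–Binet, a minor of
`A ^ m` is a sum of products of minors of `A` along chains of index sets, all of them nonnegative,
so `A ^ m[α|β] > 0` as soon as one chain `α = γ 0, …, γ m = β` has `A[γ t|γ (t + 1)] > 0`
throughout.

For a nonsingular totally nonnegative `A`, the minor `A[α|β]` is positive whenever the entries
`A (α i) (β i)` are positive and the intervals spanned by `α i` and `β i` follow each other from
left to right. This is an induction on the size: if `α` and `β` both start at the first index, pass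
to the Schur complement of the corner entry, which preserves total nonnegativity, nonsingularity and
positivity of entries; otherwise delete a row and a column at the corner that are not involved in
the minor.

With positive entries next to the diagonal, any chain whose indices move by at most one position per
step qualifies, provided that indices do not run into each other. Letting the indices of `α` start
moving towards those of `β` one after the other, those in front first, `n - 1` steps suffice.
-/

open Matrix

section CauchyBinet

variable {m n p R M : Type*} [Fintype n] [CommRing R] [AddCommMonoid M]

theorem det_mul_eq_sum_prod_mul_det [Fintype m] [DecidableEq m] (A : Matrix m n R)
    (B : Matrix n m R) :
    (A * B).det = ∑ f : m → n, (∏ i, A i (f i)) * (B.submatrix f id).det := by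
  classical
  have rows_mul : A * B = fun i ↦ ∑ j, A i j • B j := by
    ext i l
    simp [Matrix.mul_apply, Finset.sum_apply]
  rw [rows_mul]
  exact ((detRowAlternating (n := m) (R := R)).toMultilinearMap.map_sum _).trans
    (Finset.sum_congr rfl fun f _ ↦ (detRowAlternating (n := m) (R := R)).map_smul_univ _ _)

variable [LinearOrder n] {k : ℕ}

theorem sum_injective_eq_sum_orderEmbedding_perm (F : (Fin k → n) → M) :
    ∑ f with Function.Injective f, F f =
      ∑ g : Fin k ↪o n, ∑ σ : Equiv.Perm (Fin k), F (g ∘ σ) := by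
  rw [← Fintype.sum_prod_type' (f := fun (g : Fin k ↪o n) (σ : Equiv.Perm (Fin k)) ↦ F (g ∘ σ))]
  symm
  refine Finset.sum_nbij (fun x ↦ x.1 ∘ x.2) ?_ ?_ ?_ fun _ _ ↦ rfl
  · rintro ⟨g, σ⟩ -
    simpa using g.injective.comp σ.injective
  · rintro ⟨g, σ⟩ - ⟨g', σ'⟩ - (h : g ∘ σ = g' ∘ σ')
    have range_eq : Set.range g = Set.range g' := by
      rw [← EquivLike.range_comp g σ, h, EquivLike.range_comp]
    obtain rfl : g = g' :=
      DFunLike.coe_injective ((g.strictMono.range_inj g'.strictMono).1 range_eq)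
    obtain rfl : σ = σ' := DFunLike.coe_injective (g.injective.comp_left h)
    rfl
  · intro f hf
    have hf : Function.Injective f := by simpa using hf
    refine ⟨⟨OrderEmbedding.ofStrictMono (f ∘ Tuple.sort f) <|
      (Tuple.monotone_sort f).strictMono_of_injective (hf.comp (Tuple.sort f).injective),
      (Tuple.sort f)⁻¹⟩, by simp, ?_⟩
    ext i
    simp

theorem det_submatrix_mul (A : Matrix m n R) (B : Matrix n p R) (r : Fin k → m) (c : Fin k → p) :
    ((A * B).submatrix r c).det =
      ∑ g : Fin k ↪o n, (A.submatrix r g).det * (B.submatrix g c).det := by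
  have det_eq_zero (f : Fin k → n) (hf : ¬ Function.Injective f) : (B.submatrix f c).det = 0 := by
    obtain ⟨i, j, hij, hne⟩ := Function.not_injective_iff.1 hf
    exact det_zero_of_row_eq hne (by ext x; simp [hij])
  calc ((A * B).submatrix r c).det
      = ∑ f : Fin k → n, (∏ i, A (r i) (f i)) * (B.submatrix f c).det := by
        rw [submatrix_mul A B r id c Function.bijective_id, det_mul_eq_sum_prod_mul_det]
        rfl
    _ = ∑ f : Fin k → n with Function.Injective f,
          (∏ i, A (r i) (f i)) * (B.submatrix f c).det := by
        refine (Finset.sum_filter_of_ne fun f _ hf ↦ ?_).symm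
        by_contra hinj
        exact hf (by rw [det_eq_zero f hinj, mul_zero])
    _ = ∑ g : Fin k ↪o n, ∑ σ : Equiv.Perm (Fin k),
          (∏ i, A (r i) (g (σ i))) * (B.submatrix (g ∘ σ) c).det :=
        sum_injective_eq_sum_orderEmbedding_perm _
    _ = ∑ g : Fin k ↪o n, (A.submatrix r g).det * (B.submatrix g c).det := by
        refine Finset.sum_congr rfl fun g _ ↦ ?_
        rw [← det_transpose (A.submatrix r g), det_apply', Finset.sum_mul]
        refine Finset.sum_congr rfl fun σ _ ↦ ?_
        have permuted := det_permute σ (B.submatrix g c)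
        rw [submatrix_submatrix, Function.comp_id] at permuted
        simp only [permuted, transpose_apply, submatrix_apply]
        ring

end CauchyBinet

section SchurComplement

variable {K : Type*} [Field K] {k m n : ℕ}

/-- The Schur complement of the top left entry, which is meant to be nonzero. -/
def schurCompl (A : Matrix (Fin (m + 1)) (Fin (n + 1)) K) : Matrix (Fin m) (Fin n) K :=
  of fun i j ↦ A i.succ j.succ - A i.succ 0 * A 0 j.succ / A 0 0

theorem schurCompl_apply (A : Matrix (Fin (m + 1)) (Fin (n + 1)) K) (i : Fin m) (j : Fin n) :
    schurCompl A i j = A i.succ j.succ - A i.succ 0 * A 0 j.succ / A 0 0 :=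
  rfl

theorem det_eq_mul_det_schurCompl {A : Matrix (Fin (n + 1)) (Fin (n + 1)) K} (h : A 0 0 ≠ 0) :
    A.det = A 0 0 * (schurCompl A).det := by
  let c : Fin (n + 1) → K := Fin.cons 0 fun i ↦ A i.succ 0 / A 0 0
  let B : Matrix (Fin (n + 1)) (Fin (n + 1)) K := of fun i j ↦ A i j - c i * A 0 j
  have det_eq : A.det = B.det :=
    det_eq_of_forall_row_eq_smul_add_const c 0 rfl fun i j ↦ by simp [B, c]
  have column_zero (i : Fin n) : B i.succ 0 = 0 := by simp [B, c, h]
  have minor : B.submatrix (Fin.succAbove 0) Fin.succ = schurCompl A := by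
    ext i j
    simp only [submatrix_apply, Fin.succAbove_zero, schurCompl_apply, B, c, of_apply, Fin.cons_succ]
    ring
  have corner : B 0 0 = A 0 0 := by simp [B, c]
  rw [det_eq, det_succ_column_zero, Fin.sum_univ_succ, minor, corner]
  simp [column_zero]

theorem det_schurCompl_ne_zero {A : Matrix (Fin (n + 1)) (Fin (n + 1)) K} (h0 : A 0 0 ≠ 0)
    (hdet : A.det ≠ 0) : (schurCompl A).det ≠ 0 :=
  right_ne_zero_of_mul (det_eq_mul_det_schurCompl h0 ▸ hdet)

/-- The sequence `0, r 0 + 1, r 1 + 1, …`: the index set of the minor of a matrix which corresponds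
to the minor with index set `r` of its Schur complement. -/
def zeroCons (r : Fin k → Fin n) : Fin (k + 1) → Fin (n + 1) :=
  Fin.cons 0 (Fin.succ ∘ r)

@[simp]
theorem zeroCons_zero (r : Fin k → Fin n) : zeroCons r 0 = 0 :=
  rfl

@[simp]
theorem zeroCons_succ (r : Fin k → Fin n) (i : Fin k) : zeroCons r i.succ = (r i).succ :=
  rfl

theorem strictMono_zeroCons {r : Fin k → Fin n} (hr : StrictMono r) : StrictMono (zeroCons r) := by
  intro i j hij
  cases j using Fin.cases with
  | zero => exact absurd hij (Fin.not_lt_zero i)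
  | succ j =>
    cases i using Fin.cases with
    | zero => simp
    | succ i => simpa using hr (Fin.succ_lt_succ_iff.1 hij)

theorem exists_eq_zeroCons {r : Fin (k + 1) → Fin (n + 1)} (hr : StrictMono r) (h0 : r 0 = 0) :
    ∃ s : Fin k → Fin n, r = zeroCons s := by
  have succ_ne_zero (i : Fin k) : r i.succ ≠ 0 := (h0 ▸ hr i.succ_pos).ne'
  refine ⟨fun i ↦ (r i.succ).pred (succ_ne_zero i), funext fun i ↦ ?_⟩
  cases i using Fin.cases with
  | zero => exact h0
  | succ i => simp

theorem zeroCons_succAbove (i : Fin (n + 1)) : zeroCons i.succAbove = i.succ.succAbove := by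
  funext x
  cases x using Fin.cases <;> simp

theorem det_submatrix_zeroCons {A : Matrix (Fin (m + 1)) (Fin (n + 1)) K} (h : A 0 0 ≠ 0)
    (r : Fin k → Fin m) (c : Fin k → Fin n) :
    (A.submatrix (zeroCons r) (zeroCons c)).det = A 0 0 * ((schurCompl A).submatrix r c).det :=
  det_eq_mul_det_schurCompl (A := A.submatrix (zeroCons r) (zeroCons c)) h

end SchurComplement

section StrictMonoFin

variable {k n : ℕ} {α β : Fin k → Fin n}

theorem strictMono_rev_comp_comp_rev (hα : StrictMono α) : StrictMono (Fin.rev ∘ α ∘ Fin.rev) :=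
  Fin.rev_strictAnti.comp (hα.comp_strictAnti Fin.rev_strictAnti)

theorem le_val_of_strictMono (hα : StrictMono α) (i : Fin k) : (i : ℕ) ≤ α i := by
  obtain ⟨i, hi⟩ := i
  induction i with
  | zero => exact Nat.zero_le _
  | succ i ih =>
    have lt : α ⟨i, by omega⟩ < α ⟨i + 1, hi⟩ := hα (by simp)
    exact (ih (by omega)).trans_lt lt

theorem val_add_le_of_strictMono (hα : StrictMono α) (i : Fin k) : (α i : ℕ) + (k - i) ≤ n := by
  have h := le_val_of_strictMono (strictMono_rev_comp_comp_rev hα) i.rev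
  simp only [Function.comp_apply, Fin.rev_rev, Fin.val_rev] at h
  omega

theorem eq_of_strictMono_of_range_subset (hα : StrictMono α) (hβ : StrictMono β)
    (h : Set.range α ⊆ Set.range β) : α = β := by
  choose f hf using fun i ↦ h ⟨i, rfl⟩
  have f_strictMono : StrictMono f := fun i j hij ↦ by
    rw [← hβ.lt_iff_lt, hf, hf]
    exact hα hij
  funext i
  rw [← hf, f_strictMono.eq_id, id]

/-- The intervals with endpoints `α i` and `β i` follow each other from left to right. -/
def Separated {k n : ℕ} (α β : Fin k → Fin n) : Prop :=
  ∀ ⦃i j⦄, i < j → max (α i) (β i) < min (α j) (β j)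

theorem separated_iff :
    Separated α β ↔ ∀ ⦃i j⦄, i < j → α i < α j ∧ α i < β j ∧ β i < α j ∧ β i < β j := by
  simp only [Separated, max_lt_iff, lt_min_iff, and_assoc]
  exact forall₃_congr fun i j _ ↦ by tauto

theorem Separated.strictMono_left (h : Separated α β) : StrictMono α :=
  fun _ _ hij ↦ (separated_iff.1 h hij).1

theorem Separated.symm (h : Separated α β) : Separated β α :=
  separated_iff.2 fun i j hij ↦ by
    have h := separated_iff.1 h hij
    tauto

theorem Separated.apply_ne_zero {α β : Fin (k + 1) → Fin (n + 1)} (h : Separated α β)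
    (hα : α 0 ≠ 0) (i : Fin (k + 1)) : α i ≠ 0 :=
  ((Fin.pos_of_ne_zero hα).trans_le (h.strictMono_left.monotone i.zero_le)).ne'

theorem Separated.apply_ne_one {α β : Fin (k + 1) → Fin (n + 2)} (h : Separated α β)
    (hα : α 0 = 0) (hβ : β 0 ≠ 0) (i : Fin (k + 1)) : α i ≠ 1 := by
  cases i using Fin.cases with
  | zero => simp [hα]
  | succ i =>
    have lt : β 0 < α i.succ := (separated_iff.1 h i.succ_pos).2.2.1
    exact ((Fin.one_le_of_ne_zero hβ).trans_lt lt).ne'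

theorem Separated.of_zeroCons (h : Separated (zeroCons α) (zeroCons β)) : Separated α β :=
  separated_iff.2 fun i j hij ↦ by
    simpa using separated_iff.1 h (Fin.succ_lt_succ_iff.2 hij)

theorem Separated.of_succAbove {r c : Fin (n + 1)} (hrc : (r : ℕ) + c ≤ 1)
    (h : Separated (r.succAbove ∘ α) (c.succAbove ∘ β)) : Separated α β :=
  separated_iff.2 fun i j hij ↦ by
    have h := separated_iff.1 h hij
    simp only [Function.comp_apply, Fin.succAbove, Fin.lt_def, Fin.val_castSucc] at h
    split_ifs at h <;> simp only [Fin.val_castSucc, Fin.val_succ] at h <;> omega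

end StrictMonoFin

section TotallyNonneg

variable {k n : ℕ} {A B : Matrix (Fin n) (Fin n) ℝ}

theorem TotallyNonneg.apply_nonneg (hA : TotallyNonneg A) (i j : Fin n) : 0 ≤ A i j := by
  simpa using hA 1 (fun _ ↦ i) (fun _ ↦ j) (Subsingleton.strictMono _) (Subsingleton.strictMono _)

theorem TotallyNonneg.mul_apply_le_mul_apply (hA : TotallyNonneg A) {i i' j j' : Fin n}
    (hi : i < i') (hj : j < j') : A i j' * A i' j ≤ A i j * A i' j' := by
  have minor := hA 2 ![i, i'] ![j, j'] (by simpa using hi) (by simpa using hj)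
  rw [det_fin_two] at minor
  simpa using minor

theorem TotallyNonneg.submatrix (hA : TotallyNonneg A) {r c : Fin k → Fin n} (hr : StrictMono r)
    (hc : StrictMono c) : TotallyNonneg (A.submatrix r c) := fun l r' c' hr' hc' ↦ by
  simpa using hA l (r ∘ r') (c ∘ c') (hr.comp hr') (hc.comp hc')

theorem TotallyNonneg.transpose (hA : TotallyNonneg A) : TotallyNonneg Aᵀ := fun l r c hr hc ↦ by
  rw [← det_transpose]
  exact hA l c r hc hr

theorem TotallyNonneg.submatrix_rev (hA : TotallyNonneg A) :
    TotallyNonneg (A.submatrix Fin.rev Fin.rev) := fun l r c hr hc ↦ by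
  rw [← det_submatrix_equiv_self Fin.revPerm]
  exact hA l _ _ (strictMono_rev_comp_comp_rev hr) (strictMono_rev_comp_comp_rev hc)

theorem TotallyNonneg.one : TotallyNonneg (1 : Matrix (Fin n) (Fin n) ℝ) := by
  intro l r c hr hc
  by_cases h : Set.range r ⊆ Set.range c
  · rw [eq_of_strictMono_of_range_subset hr hc h, submatrix_one c hc.injective, det_one]
    exact zero_le_one
  · obtain ⟨_, ⟨i, rfl⟩, hi⟩ := Set.not_subset.1 h
    have row_zero (j : Fin l) : (1 : Matrix (Fin n) (Fin n) ℝ) (r i) (c j) = 0 :=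
      one_apply_ne fun h ↦ hi ⟨j, h.symm⟩
    exact (det_eq_zero_of_row_eq_zero i row_zero).ge

theorem TotallyNonneg.mul (hA : TotallyNonneg A) (hB : TotallyNonneg B) :
    TotallyNonneg (A * B) := by
  intro l r c hr hc
  rw [det_submatrix_mul]
  exact Finset.sum_nonneg fun g _ ↦
    mul_nonneg (hA l r g hr g.strictMono) (hB l g c g.strictMono hc)

theorem TotallyNonneg.pow (hA : TotallyNonneg A) (m : ℕ) : TotallyNonneg (A ^ m) := by
  induction m with
  | zero => exact TotallyNonneg.one
  | succ m ih => exact pow_succ A m ▸ ih.mul hA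

theorem TotallyNonneg.det_submatrix_mul_pos (hA : TotallyNonneg A) (hB : TotallyNonneg B)
    {r s c : Fin k → Fin n} (hr : StrictMono r) (hs : StrictMono s) (hc : StrictMono c)
    (hrs : 0 < (A.submatrix r s).det) (hsc : 0 < (B.submatrix s c).det) :
    0 < ((A * B).submatrix r c).det := by
  rw [det_submatrix_mul]
  exact Finset.sum_pos'
    (fun g _ ↦ mul_nonneg (hA k r g hr g.strictMono) (hB k g c g.strictMono hc))
    ⟨OrderEmbedding.ofStrictMono s hs, Finset.mem_univ _, mul_pos hrs hsc⟩

theorem TotallyNonneg.det_submatrix_pow_pos (hA : TotallyNonneg A) {γ : ℕ → Fin k → Fin n}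
    (hγ : ∀ t, StrictMono (γ t)) (hstep : ∀ t, 0 < (A.submatrix (γ t) (γ (t + 1))).det) (m : ℕ) :
    0 < ((A ^ m).submatrix (γ 0) (γ m)).det := by
  induction m with
  | zero => simp [submatrix_one (γ 0) (hγ 0).injective]
  | succ m ih =>
    rw [pow_succ]
    exact (hA.pow m).det_submatrix_mul_pos hA (hγ 0) (hγ m) (hγ (m + 1)) ih (hstep m)

end TotallyNonneg

section Nonsingular

variable {k n : ℕ}

theorem TotallyNonneg.apply_zero_zero_pos {A : Matrix (Fin (n + 1)) (Fin (n + 1)) ℝ}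
    (hA : TotallyNonneg A) (hdet : A.det ≠ 0) : 0 < A 0 0 := by
  refine (hA.apply_nonneg 0 0).lt_of_ne' fun h0 ↦ hdet ?_
  have mul_eq_zero_of_ne (i j : Fin n) : A 0 j.succ * A i.succ 0 = 0 := by
    refine le_antisymm ?_ (mul_nonneg (hA.apply_nonneg _ _) (hA.apply_nonneg _ _))
    simpa [h0] using hA.mul_apply_le_mul_apply i.succ_pos j.succ_pos
  by_cases hrow : ∀ j : Fin n, A 0 j.succ = 0
  · exact det_eq_zero_of_row_eq_zero 0 (Fin.cases h0 hrow)
  · obtain ⟨j, hj⟩ := not_forall.1 hrow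
    exact det_eq_zero_of_column_eq_zero 0
      (Fin.cases h0 fun i ↦ (mul_eq_zero.1 (mul_eq_zero_of_ne i j)).resolve_left hj)

theorem TotallyNonneg.schurCompl {A : Matrix (Fin (n + 1)) (Fin (n + 1)) ℝ}
    (hA : TotallyNonneg A) (h0 : 0 < A 0 0) : TotallyNonneg (schurCompl A) := by
  intro l r c hr hc
  have minor := hA (l + 1) _ _ (strictMono_zeroCons hr) (strictMono_zeroCons hc)
  rw [det_submatrix_zeroCons h0.ne'] at minor
  exact nonneg_of_mul_nonneg_right minor h0

theorem TotallyNonneg.apply_self_pos {A : Matrix (Fin n) (Fin n) ℝ} (hA : TotallyNonneg A)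
    (hdet : A.det ≠ 0) (i : Fin n) : 0 < A i i := by
  induction n with
  | zero => exact i.elim0
  | succ n ih =>
    have h0 := hA.apply_zero_zero_pos hdet
    cases i using Fin.cases with
    | zero => exact h0
    | succ i =>
      have schur_pos := ih (hA.schurCompl h0) (det_schurCompl_ne_zero h0.ne' hdet) i
      rw [schurCompl_apply, sub_pos] at schur_pos
      exact schur_pos.trans_le' <|
        div_nonneg (mul_nonneg (hA.apply_nonneg _ _) (hA.apply_nonneg _ _)) h0.le

theorem TotallyNonneg.schurCompl_apply_pos_of_lt {A : Matrix (Fin (n + 1)) (Fin (n + 1)) ℝ}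
    (hA : TotallyNonneg A) (hdet : A.det ≠ 0) {i j : Fin n} (hij : i < j)
    (hpos : 0 < A i.succ j.succ) : 0 < _root_.schurCompl A i j := by
  have h0 := hA.apply_zero_zero_pos hdet
  have diag_pos := hA.apply_self_pos hdet i.succ
  have schur_diag_pos :=
    (hA.schurCompl h0).apply_self_pos (det_schurCompl_ne_zero h0.ne' hdet) i
  rw [schurCompl_apply, sub_pos, div_lt_iff₀ h0] at schur_diag_pos ⊢
  refine lt_of_mul_lt_mul_right ?_ diag_pos.le
  calc A i.succ 0 * A 0 j.succ * A i.succ i.succ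
      = A i.succ 0 * (A 0 j.succ * A i.succ i.succ) := by ring
    _ ≤ A i.succ 0 * (A 0 i.succ * A i.succ j.succ) :=
        mul_le_mul_of_nonneg_left
          (hA.mul_apply_le_mul_apply i.succ_pos (Fin.succ_lt_succ_iff.2 hij)) (hA.apply_nonneg _ _)
    _ = A i.succ 0 * A 0 i.succ * A i.succ j.succ := by ring
    _ < A i.succ i.succ * A 0 0 * A i.succ j.succ := mul_lt_mul_of_pos_right schur_diag_pos hpos
    _ = A i.succ j.succ * A 0 0 * A i.succ i.succ := by ring

theorem TotallyNonneg.schurCompl_apply_pos {A : Matrix (Fin (n + 1)) (Fin (n + 1)) ℝ}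
    (hA : TotallyNonneg A) (hdet : A.det ≠ 0) {i j : Fin n} (hpos : 0 < A i.succ j.succ) :
    0 < _root_.schurCompl A i j := by
  have h0 := hA.apply_zero_zero_pos hdet
  rcases lt_trichotomy i j with hij | rfl | hij
  · exact hA.schurCompl_apply_pos_of_lt hdet hij hpos
  · exact (hA.schurCompl h0).apply_self_pos (det_schurCompl_ne_zero h0.ne' hdet) i
  · have pos := hA.transpose.schurCompl_apply_pos_of_lt (by rwa [det_transpose]) hij hpos
    simp only [schurCompl_apply, transpose_apply] at pos ⊢
    rwa [mul_comm]

theorem TotallyNonneg.det_delete_ne_zero_of_le_add {A : Matrix (Fin (n + 1)) (Fin (n + 1)) ℝ}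
    (hA : TotallyNonneg A) (hdet : A.det ≠ 0) {r c : Fin (n + 1)} (hrc : 2 * n ≤ (r : ℕ) + c + 1)
    (hpos : 0 < A c r) : (A.submatrix r.succAbove c.succAbove).det ≠ 0 := by
  induction n with
  | zero => simp
  | succ n ih =>
    by_cases h : r = 0 ∨ c = 0
    · obtain rfl : n = 0 := by
        simp only [Fin.ext_iff, Fin.val_zero] at h
        omega
      have succAbove_r : r.succAbove 0 = c := by fin_cases r <;> fin_cases c <;> simp_all
      have succAbove_c : c.succAbove 0 = r := by fin_cases r <;> fin_cases c <;> simp_all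
      rw [det_fin_one, submatrix_apply, succAbove_r, succAbove_c]
      exact hpos.ne'
    · push Not at h
      obtain ⟨r, rfl⟩ := Fin.exists_succ_eq.2 h.1
      obtain ⟨c, rfl⟩ := Fin.exists_succ_eq.2 h.2
      have h0 := hA.apply_zero_zero_pos hdet
      rw [← zeroCons_succAbove, ← zeroCons_succAbove, det_submatrix_zeroCons h0.ne']
      refine mul_ne_zero h0.ne' (ih (hA.schurCompl h0) (det_schurCompl_ne_zero h0.ne' hdet) ?_
        (hA.schurCompl_apply_pos hdet hpos))
      simp only [Fin.val_succ] at hrc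
      omega

theorem TotallyNonneg.det_delete_ne_zero_of_add_le {A : Matrix (Fin (n + 1)) (Fin (n + 1)) ℝ}
    (hA : TotallyNonneg A) (hdet : A.det ≠ 0) {r c : Fin (n + 1)} (hrc : (r : ℕ) + c ≤ 1)
    (hpos : 0 < A c r) : (A.submatrix r.succAbove c.succAbove).det ≠ 0 := by
  have det_rev : (A.submatrix Fin.rev Fin.rev).det ≠ 0 :=
    (det_submatrix_equiv_self Fin.revPerm A).trans_ne hdet
  have reversed := hA.submatrix_rev.det_delete_ne_zero_of_le_add det_rev (r := r.rev) (c := c.rev)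
    (by simp only [Fin.val_rev]; omega) (by simpa using hpos)
  rw [← det_submatrix_equiv_self Fin.revPerm]
  convert reversed using 2
  ext i j
  simp [Fin.rev_succAbove]

theorem exists_succAbove_comp_eq {α : Fin k → Fin (n + 1)} {r : Fin (n + 1)}
    (hr : ∀ i, α i ≠ r) : ∃ α' : Fin k → Fin n, r.succAbove ∘ α' = α := by
  choose α' h using fun i ↦ Fin.exists_succAbove_eq (hr i)
  exact ⟨α', funext h⟩

theorem TotallyNonneg.apply_pos_of_lt_of_le {A : Matrix (Fin n) (Fin n) ℝ} (hA : TotallyNonneg A)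
    (hdet : A.det ≠ 0) {i j l : Fin n} (hij : i < j) (hjl : j ≤ l) (hpos : 0 < A i l) :
    0 < A i j := by
  rcases hjl.eq_or_lt with rfl | hjl
  · exact hpos
  · have diag_pos := hA.apply_self_pos hdet j
    exact pos_of_mul_pos_left
      ((mul_pos hpos diag_pos).trans_le (hA.mul_apply_le_mul_apply hij hjl))
      (hA.apply_nonneg j l)

theorem TotallyNonneg.exists_corner_avoiding {A : Matrix (Fin (n + 1)) (Fin (n + 1)) ℝ}
    (hA : TotallyNonneg A) (hdet : A.det ≠ 0) {α β : Fin (k + 1) → Fin (n + 1)}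
    (hsep : Separated α β) (hpos : 0 < A (α 0) (β 0)) (hne : ¬ (α 0 = 0 ∧ β 0 = 0)) :
    ∃ r c : Fin (n + 1), (r : ℕ) + c ≤ 1 ∧ 0 < A c r ∧ (∀ i, α i ≠ r) ∧ ∀ i, β i ≠ c := by
  obtain ⟨n, rfl⟩ : ∃ l, n = l + 1 := Nat.exists_eq_succ_of_ne_zero <| by
    rintro rfl
    exact hne ⟨Fin.fin_one_eq_zero _, Fin.fin_one_eq_zero _⟩
  by_cases hα : α 0 = 0
  · have hβ : β 0 ≠ 0 := fun h ↦ hne ⟨hα, h⟩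
    refine ⟨1, 0, by simp, ?_, hsep.apply_ne_one hα hβ, hsep.symm.apply_ne_zero hβ⟩
    exact hA.apply_pos_of_lt_of_le hdet Fin.zero_lt_one (Fin.one_le_of_ne_zero hβ) (hα ▸ hpos)
  · by_cases hβ : β 0 = 0
    · refine ⟨0, 1, by simp, ?_, hsep.apply_ne_zero hα, hsep.symm.apply_ne_one hβ hα⟩
      exact hA.transpose.apply_pos_of_lt_of_le (by rwa [det_transpose]) Fin.zero_lt_one
        (Fin.one_le_of_ne_zero hα) (hβ ▸ hpos)
    · exact ⟨0, 0, by simp, hA.apply_zero_zero_pos hdet, hsep.apply_ne_zero hα,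
        hsep.symm.apply_ne_zero hβ⟩

theorem TotallyNonneg.det_submatrix_pos {A : Matrix (Fin n) (Fin n) ℝ} (hA : TotallyNonneg A)
    (hdet : A.det ≠ 0) {α β : Fin k → Fin n} (hsep : Separated α β)
    (hpos : ∀ i, 0 < A (α i) (β i)) : 0 < (A.submatrix α β).det := by
  induction n generalizing k with
  | zero =>
    have : IsEmpty (Fin k) := ⟨fun i ↦ (α i).elim0⟩
    simp
  | succ n ih =>
    cases k with
    | zero => simp
    | succ k =>
      by_cases h : α 0 = 0 ∧ β 0 = 0
      · obtain ⟨α, rfl⟩ := exists_eq_zeroCons hsep.strictMono_left h.1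
        obtain ⟨β, rfl⟩ := exists_eq_zeroCons hsep.symm.strictMono_left h.2
        have h0 := hA.apply_zero_zero_pos hdet
        rw [det_submatrix_zeroCons h0.ne']
        exact mul_pos h0 (ih (hA.schurCompl h0) (det_schurCompl_ne_zero h0.ne' hdet)
          hsep.of_zeroCons fun i ↦ hA.schurCompl_apply_pos hdet (hpos i.succ))
      · obtain ⟨r, c, hrc, hcr, hr, hc⟩ := hA.exists_corner_avoiding hdet hsep (hpos 0) h
        obtain ⟨α, rfl⟩ := exists_succAbove_comp_eq hr
        obtain ⟨β, rfl⟩ := exists_succAbove_comp_eq hc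
        simpa using ih
          (hA.submatrix (Fin.strictMono_succAbove r) (Fin.strictMono_succAbove c))
          (hA.det_delete_ne_zero_of_add_le hdet hrc hcr) (hsep.of_succAbove hrc) hpos

end Nonsingular

section StaggeredPath

variable {k n : ℕ} {α β : Fin k → Fin n}

/-- The position at time `t` of the `i`-th of `k` particles moving from `α i` to `β i` at unit
speed: the particles going right start one after the other from the last one on, the others
from the first one on, so that no particle runs into the next one. The delays `k - 1 - i` and `i`
are built into truncated subtractions. -/
def staggeredPath (α β : Fin k → Fin n) (t : ℕ) (i : Fin k) : Fin n :=
  ⟨if α i ≤ β i then min (β i) (α i + (t + i + 1 - k)) else max (β i) (α i - (t - i)), by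
    split_ifs <;> omega⟩

theorem val_staggeredPath (α β : Fin k → Fin n) (t : ℕ) (i : Fin k) :
    (staggeredPath α β t i : ℕ) =
      if (α i : ℕ) ≤ β i then min (β i : ℕ) (α i + (t + i + 1 - k))
      else max (β i : ℕ) (α i - (t - i)) :=
  rfl

theorem staggeredPath_zero (α β : Fin k → Fin n) : staggeredPath α β 0 = α := by
  ext i
  rw [val_staggeredPath]
  split_ifs <;> omega

theorem staggeredPath_eq_right (α : Fin k → Fin n) (hβ : StrictMono β) {t : ℕ} (ht : n - 1 ≤ t) :
    staggeredPath α β t = β := by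
  ext i
  have le_β := le_val_of_strictMono hβ i
  have β_le := val_add_le_of_strictMono hβ i
  rw [val_staggeredPath]
  split_ifs <;> omega

theorem separated_staggeredPath (hα : StrictMono α) (hβ : StrictMono β) (t : ℕ) :
    Separated (staggeredPath α β t) (staggeredPath α β (t + 1)) :=
  separated_iff.2 fun i j hij ↦ by
    have hα := hα hij
    have hβ := hβ hij
    simp only [Fin.lt_def, val_staggeredPath] at *
    split_ifs <;> omega

theorem staggeredPath_succ_close (α β : Fin k → Fin n) (t : ℕ) (i : Fin k) :
    (staggeredPath α β t i : ℕ) ≤ staggeredPath α β (t + 1) i + 1 ∧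
      (staggeredPath α β (t + 1) i : ℕ) ≤ staggeredPath α β t i + 1 := by
  simp only [val_staggeredPath]
  split_ifs <;> omega

end StaggeredPath

theorem TotallyNonneg.apply_pos_of_close {n : ℕ} {A : Matrix (Fin n) (Fin n) ℝ}
    (hA : TotallyNonneg A) (hdet : A.det ≠ 0)
    (hadj : ∀ i j : Fin n, i.val + 1 = j.val → 0 < A i j ∧ 0 < A j i) {i j : Fin n}
    (hij : (i : ℕ) ≤ j + 1) (hji : (j : ℕ) ≤ i + 1) : 0 < A i j := by
  rcases lt_trichotomy i j with h | rfl | h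
  · exact (hadj i j (by omega)).1
  · exact hA.apply_self_pos hdet i
  · exact (hadj j i (by omega)).2

theorem TotallyNonneg.totallyPos_pow {n : ℕ} {A : Matrix (Fin n) (Fin n) ℝ}
    (hA : TotallyNonneg A) (hdet : A.det ≠ 0)
    (hadj : ∀ i j : Fin n, i.val + 1 = j.val → 0 < A i j ∧ 0 < A j i) {m : ℕ} (hm : n - 1 ≤ m) :
    TotallyPos (A ^ m) := by
  intro k α β hα hβ
  have hsep := separated_staggeredPath hα hβ
  have step (t : ℕ) :
      0 < (A.submatrix (staggeredPath α β t) (staggeredPath α β (t + 1))).det :=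
    hA.det_submatrix_pos hdet (hsep t) fun i ↦
      have ⟨hij, hji⟩ := staggeredPath_succ_close α β t i
      hA.apply_pos_of_close hdet hadj hij hji
  simpa only [staggeredPath_zero, staggeredPath_eq_right α hβ hm] using
    hA.det_submatrix_pow_pos (fun t ↦ (hsep t).strictMono_left) step m

theorem stmt4 {n : ℕ} (A : Matrix (Fin n) (Fin n) ℝ)
    (hTN : TotallyNonneg A) (hinv : A.det ≠ 0)
    (hdiag : ∀ i j : Fin n, i.val + 1 = j.val → 0 < A i j ∧ 0 < A j i) :
    TotallyPos (A ^ (n - 1)) ∧ ∃ k : ℕ, 0 < k ∧ TotallyPos (A ^ k) :=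
  ⟨hTN.totallyPos_pow hinv hdiag le_rfl,
    n - 1 + 1, Nat.succ_pos _, hTN.totallyPos_pow hinv hdiag (Nat.le_succ _)⟩
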